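/- arXiv:2510.23315 — 7 statements merged into one kernel-verified Lean document; each statement's English description precedes it below -/
import Mathlib

section
/- Let x_1, …, x_K be real numbers (K ≥ 1) and let x_{(1)} ≤ … ≤ x_{(K)} denote their sorted rearrangement. For 1 ≤ M ≤ K define the PA bottleneck offset x_str^PA := (1/2)·min_{1 ≤ i ≤ K−M+1} (x_{(i+M−1)} − x_{(i)}) and the conventional bottleneck offset x_str^CONV := Y_{[M]}, the M-th smallest value among |x_1|, …, |x_K|. Then x_str^PA ≤ x_str^CONV, i.e. (1/2)·min_{1 ≤ i ≤ K−M+1} (x_{(i+M−1)} − x_{(i)}) ≤ Y_{[M]}. -/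
/-!
Let `Y` be the `M`-th smallest absolute value. At least `M` of the points lie in `[-Y, Y]`. Let
`a` and `b` be the smallest and largest ranks, in the sorted order, among `M` such points. The `M`
ranks lie in `[a, b]`, so `a + M - 1 ≤ b`, and the window starting at `a` satisfies
`x_(a+M-1) - x_(a) ≤ x_(b) - x_(a) ≤ 2 Y`.
-/

/-- The PA bottleneck offset (half the width of the shortest window
containing `M` consecutive order statistics) is at most the conventional bottleneck
offset `Y_[M]` (the `M`-th smallest absolute value). -/
theorem pa_bottleneck_le_conv_bottleneck
    (K M : ℕ) (hK : 1 ≤ K) (hM : 1 ≤ M) (hMK : M ≤ K)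
    (x : Fin K → ℝ)
    (σ τ : Equiv.Perm (Fin K))
    (xs ys : Fin K → ℝ)
    (hxs : xs = x ∘ σ) (hxs_mono : Monotone xs)
    (hys : ys = (fun i => |x i|) ∘ τ) (hys_mono : Monotone ys) :
    (1 / 2 : ℝ) *
      (Finset.univ.inf'
        (Finset.univ_nonempty_iff.mpr ⟨⟨0, by omega⟩⟩)
        (fun i : Fin (K - M + 1) =>
          xs ⟨i.1 + M - 1, by have := i.isLt; omega⟩ - xs ⟨i.1, by have := i.isLt; omega⟩))
      ≤ ys ⟨M - 1, by omega⟩ := by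
  subst hxs hys
  set Y := ((fun i => |x i|) ∘ τ) ⟨M - 1, by omega⟩ with hY
  -- the ranks in the sorted order of the `M` points of smallest absolute value
  let S : Finset (Fin K) :=
    (Finset.Iic (⟨M - 1, by omega⟩ : Fin K)).map (τ.trans σ.symm).toEmbedding
  have hcard : S.card = M := by
    simp only [S, Finset.card_map, Fin.card_Iic]
    omega
  have hS : ∀ j ∈ S, |(x ∘ σ) j| ≤ Y := by
    intro j hj
    obtain ⟨k, hk, rfl⟩ := Finset.mem_map.mp hj
    simpa [hY] using hys_mono (Finset.mem_Iic.mp hk)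
  have hne : S.Nonempty := Finset.card_pos.mp (by omega)
  have ha := S.min'_mem hne
  have hb := S.max'_mem hne
  have hsub : S ⊆ Finset.Icc (S.min' hne) (S.max' hne) := fun j hj =>
    Finset.mem_Icc.mpr ⟨S.min'_le j hj, S.le_max' j hj⟩
  have hle := Finset.card_le_card hsub
  rw [hcard, Fin.card_Icc] at hle
  generalize S.min' hne = a at *
  generalize S.max' hne = b at *
  have hbK := b.isLt
  have hinf := Finset.inf'_le
    (fun i : Fin (K - M + 1) =>
      (x ∘ σ) ⟨i.1 + M - 1, by have := i.isLt; omega⟩ -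
        (x ∘ σ) ⟨i.1, by have := i.isLt; omega⟩)
    (Finset.mem_univ (⟨a.1, by omega⟩ : Fin (K - M + 1)))
  have hmono : (x ∘ σ) ⟨a.1 + M - 1, by omega⟩ ≤ (x ∘ σ) b :=
    hxs_mono (Fin.le_def.mpr (by dsimp only; omega))
  have h1 := (abs_le.mp (hS a ha)).1
  have h2 := (abs_le.mp (hS b hb)).2
  dsimp only [Fin.eta] at hinf
  linarith
end

section
/- (Theorem 1, SFL latency dominance.) Let S > 0, c > 0, d > 0 be real constants and let x_1, …, x_K be real numbers with 1 ≤ M ≤ K. Define L_M := min_{1 ≤ i ≤ K−M+1}(x_{(i+M−1)} − x_{(i)}) and Y_{[M]} the M-th smallest of |x_1|, …, |x_K|. Then the PA round latency is no larger than the conventional round latency: c / log₂(1 + S/((L_M/2)² + d²)) ≤ c / log₂(1 + S/(Y_{[M]}² + d²)). -/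
/-!
The latency `c / log₂(1 + S/(t² + d²))` is increasing in `t ≥ 0` (`latency_mono`), so it suffices to
show `0 ≤ L_M / 2 ≤ Y_[M]`. The `M` points of smallest absolute value all lie in
`[-Y_[M], Y_[M]]`. In the sorted order, the lowest of them (at index `a`) and the highest (at
index `b`) satisfy `b ≥ a + M - 1`, so the window of `M` consecutive sorted points starting at
`a` also lies in `[-Y_[M], Y_[M]]` and has length at most `2 Y_[M]`
(`exists_window_le_two_mul`). Hence the shortest window satisfies `L_M ≤ 2 Y_[M]`.
-/

lemma latency_mono {S c d s t : ℝ} (hS : 0 < S) (hc : 0 < c) (hd : 0 < d)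
    (hs : 0 ≤ s) (hst : s ≤ t) :
    c / Real.logb 2 (1 + S / (s ^ 2 + d ^ 2)) ≤ c / Real.logb 2 (1 + S / (t ^ 2 + d ^ 2)) := by
  have hpos : 0 < S / (t ^ 2 + d ^ 2) := by positivity
  have hlog : 0 < Real.logb 2 (1 + S / (t ^ 2 + d ^ 2)) :=
    Real.logb_pos (by norm_num) (by linarith)
  apply div_le_div_of_nonneg_left hc.le hlog
  apply Real.logb_le_logb_of_le (by norm_num) (by linarith)
  gcongr

/-- If `M` points of a sorted family have absolute value at most `Y`, then some window of `M`
consecutive points has length at most `2 * Y`. -/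
lemma exists_window_le_two_mul {K M : ℕ} (hM : 1 ≤ M) {xs : Fin K → ℝ} (hmono : Monotone xs)
    {Y : ℝ} {T : Finset (Fin K)} (hcard : T.card = M) (hT : ∀ j ∈ T, |xs j| ≤ Y) :
    ∃ (a : ℕ) (h : a + M - 1 < K),
      xs ⟨a + M - 1, h⟩ - xs ⟨a, by omega⟩ ≤ 2 * Y := by
  have hne : T.Nonempty := Finset.card_pos.mp (by omega)
  have hsub : T ⊆ Finset.Icc (T.min' hne) (T.max' hne) := fun j hj =>
    Finset.mem_Icc.mpr ⟨T.min'_le j hj, T.le_max' j hj⟩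
  have hle := Finset.card_le_card hsub
  rw [hcard, Fin.card_Icc] at hle
  have hb := (T.max' hne).isLt
  refine ⟨(T.min' hne).1, by omega, ?_⟩
  have h1 := (abs_le.mp (hT _ (T.min'_mem hne))).1
  have h2 := (abs_le.mp (hT _ (T.max'_mem hne))).2
  have h3 : xs ⟨(T.min' hne).1 + M - 1, by omega⟩ ≤ xs (T.max' hne) :=
    hmono (Fin.le_def.mpr (by simp only; omega))
  have h4 : xs ⟨(T.min' hne).1, (T.min' hne).isLt⟩ = xs (T.min' hne) := rfl
  linarith

/-- Theorem 1, SFL latency dominance: the PA round latency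
`c / log₂(1 + S/((L_M/2)² + d²))` is no larger than the conventional round latency
`c / log₂(1 + S/(Y_[M]² + d²))`. -/
theorem sfl_latency_dominance
    (S c d : ℝ) (hS : 0 < S) (hc : 0 < c) (hd : 0 < d)
    (K M : ℕ) (hK : 1 ≤ K) (hM : 1 ≤ M) (hMK : M ≤ K)
    (x : Fin K → ℝ)
    (σ τ : Equiv.Perm (Fin K))
    (xs ys : Fin K → ℝ)
    (hxs : xs = x ∘ σ) (hxs_mono : Monotone xs)
    (hys : ys = (fun i => |x i|) ∘ τ) (hys_mono : Monotone ys) :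
    c / Real.logb 2 (1 + S /
        (((Finset.univ.inf'
            (Finset.univ_nonempty_iff.mpr ⟨⟨0, by omega⟩⟩)
            (fun i : Fin (K - M + 1) =>
              xs ⟨i.1 + M - 1, by have := i.isLt; omega⟩
                - xs ⟨i.1, by have := i.isLt; omega⟩)) / 2) ^ 2 + d ^ 2))
      ≤ c / Real.logb 2 (1 + S / ((ys ⟨M - 1, by omega⟩) ^ 2 + d ^ 2)) := by
  -- The sorted positions of the `M` points of smallest absolute value.
  obtain ⟨a, ha, hwin⟩ := exists_window_le_two_mul hM hxs_mono
    (Y := ys ⟨M - 1, by omega⟩)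
    (T := (Finset.Iic (⟨M - 1, by omega⟩ : Fin K)).map (τ.trans σ.symm).toEmbedding)
    (by rw [Finset.card_map, Fin.card_Iic]; simp only; omega)
    (by
      intro j hj
      obtain ⟨i, hi, rfl⟩ := Finset.mem_map.mp hj
      have h := hys_mono (Finset.mem_Iic.mp hi)
      simpa [hxs, hys] using h)
  apply latency_mono hS hc hd
  · apply div_nonneg _ (by norm_num)
    apply Finset.le_inf'
    intro i _
    exact sub_nonneg.mpr (hxs_mono (Fin.le_def.mpr (by simp only; omega)))
  · rw [div_le_iff₀ (by norm_num), mul_comm]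
    exact (Finset.inf'_le _ (Finset.mem_univ (⟨a, by omega⟩ : Fin (K - M + 1)))).trans hwin
end

section
/- (Lemma B.1, symmetric concentration for the M-th order statistic.) Let K ≥ 1 and 1 ≤ M ≤ K be natural numbers, set p† := M/(K+1), and let 0 < ε < 1. Then the Beta(M, K+1−M) mass of the two-sided tail satisfies ∫_{{u ∈ [0,1] : |u − p†| ≥ ε}} (K! / ((M−1)!·(K−M)!)) · u^{M−1}(1−u)^{K−M} du ≤ 2·exp(−2Kε²). -/
/-!
The mass of `Beta(M, K+1-M)` to the right of `t` is the probability that a `Binomial(K, t)`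
variable is at most `M - 1`, and the mass to the left of `t` is the probability that it is at
least `M`: the derivative of the binomial distribution function in `t` telescopes
(`hasDerivAt_binomial_cdf`). Hoeffding's inequality (`binomial_hoeffding`) bounds both. At
`t = p† ± ε` with `p† = M / (K + 1)` the binomial thresholds satisfy
`(M - 1) / K ≤ p† ≤ M / K`, so the deviation of the empirical mean from `t` is at least `ε` on
either side, and each tail is at most `exp (-2 K ε²)`.
-/

open MeasureTheory

/-- Hoeffding's lemma for a Bernoulli variable, read off the moment generating function of the
measure `t δ₁ + (1 - t) δ₀`. -/
lemma bernoulli_mgf_le (t l : ℝ) (h0 : 0 ≤ t) (h1 : t ≤ 1) :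
    t * Real.exp l + (1 - t) ≤ Real.exp (l * t + l ^ 2 / 8) := by
  set μ : Measure ℝ := ENNReal.ofReal t • Measure.dirac 1 +
    ENNReal.ofReal (1 - t) • Measure.dirac 0 with hμ
  have hprob : IsProbabilityMeasure μ := by
    constructor
    simp only [hμ, Measure.add_apply, Measure.smul_apply, measure_univ, smul_eq_mul, mul_one]
    rw [← ENNReal.ofReal_add h0 (by linarith)]
    simp
  have hint : ∀ f : ℝ → ℝ, ∫ x, f x ∂μ = t * f 1 + (1 - t) * f 0 := by
    intro f
    have hi : ∀ a b : ℝ, Integrable f (ENNReal.ofReal a • Measure.dirac b) := fun a b =>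
      (integrable_dirac (by simp)).smul_measure ENNReal.ofReal_ne_top
    rw [hμ, integral_add_measure (hi _ _) (hi _ _), integral_smul_measure, integral_smul_measure,
      integral_dirac, integral_dirac, ENNReal.toReal_ofReal h0,
      ENNReal.toReal_ofReal (by linarith)]
    simp
  have hb : ∀ᵐ x ∂μ, (id x : ℝ) ∈ Set.Icc (0 : ℝ) 1 := by
    rw [hμ, ae_add_measure_iff]
    constructor <;> refine Measure.ae_smul_measure ?_ _ <;> rw [ae_dirac_eq] <;> simp
  have h := (ProbabilityTheory.hasSubgaussianMGF_of_mem_Icc (μ := μ) (X := id)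
    aemeasurable_id hb).mgf_le l
  rw [ProbabilityTheory.mgf, hint, hint] at h
  simp only [id, mul_one, mul_zero, add_zero, zero_sub, sub_zero] at h
  have e1 : Real.exp (l * (1 - t)) = Real.exp l * Real.exp (-(l * t)) := by
    rw [← Real.exp_add]; ring_nf
  have e2 : Real.exp (l * t + l ^ 2 / 8) = Real.exp (l * t) * Real.exp (l ^ 2 / 8) :=
    Real.exp_add _ _
  have e3 : Real.exp (l * t) * Real.exp (-(l * t)) = 1 := by
    rw [← Real.exp_add]; simp
  have e4 : l * -t = -(l * t) := by ring
  have h' : t * Real.exp (l * (1 - t)) + (1 - t) * Real.exp (l * -t) ≤ Real.exp (l ^ 2 / 8) := by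
    refine h.trans (le_of_eq ?_)
    congr 1
    simp
    ring
  rw [e1, e4] at h'
  rw [e2]
  calc t * Real.exp l + (1 - t)
      = (Real.exp (l * t) * Real.exp (-(l * t))) * (t * Real.exp l + (1 - t)) := by
        rw [e3, one_mul]
    _ = Real.exp (l * t) *
        (t * (Real.exp l * Real.exp (-(l * t))) + (1 - t) * Real.exp (-(l * t))) := by ring
    _ ≤ _ := by gcongr

/-- Hoeffding's inequality for the binomial distribution. The sign condition says that `S` lies
beyond `x` as seen from the mean `n t`, which covers the upper and the lower tail at once. -/
lemma binomial_hoeffding (n : ℕ) (hn : 0 < n) (t x : ℝ) (h0 : 0 ≤ t) (h1 : t ≤ 1)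
    (S : Finset ℕ) (hS : S ⊆ Finset.range (n + 1))
    (hx : ∀ j ∈ S, 0 ≤ (x / n - t) * (j - x)) :
    ∑ j ∈ S, (bernsteinPolynomial ℝ n j).eval t ≤ Real.exp (-2 * n * (x / n - t) ^ 2) := by
  have hn' : (0 : ℝ) < n := by exact_mod_cast hn
  have h1' : 0 ≤ 1 - t := by linarith
  -- the minimizer of the Chernoff exponent `-l (x - n t) + n l² / 8`
  set l : ℝ := 4 * (x / n - t) with hl
  have hB : ∀ j, 0 ≤ (bernsteinPolynomial ℝ n j).eval t := by
    intro j
    simp only [bernsteinPolynomial, Polynomial.eval_mul, Polynomial.eval_natCast,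
      Polynomial.eval_pow, Polynomial.eval_X, Polynomial.eval_sub, Polynomial.eval_one]
    positivity
  calc ∑ j ∈ S, (bernsteinPolynomial ℝ n j).eval t
      ≤ ∑ j ∈ S, Real.exp (l * (j - x)) * (bernsteinPolynomial ℝ n j).eval t := by
        refine Finset.sum_le_sum fun j hj => le_mul_of_one_le_left (hB j) ?_
        rw [Real.one_le_exp_iff]
        have := hx j hj
        rw [hl]; linarith
    _ ≤ ∑ j ∈ Finset.range (n + 1),
          Real.exp (l * (j - x)) * (bernsteinPolynomial ℝ n j).eval t :=
        Finset.sum_le_sum_of_subset_of_nonneg hS fun j _ _ =>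
          mul_nonneg (Real.exp_nonneg _) (hB j)
    _ = Real.exp (-(l * x)) * (t * Real.exp l + (1 - t)) ^ n := by
        rw [add_pow, Finset.mul_sum]
        refine Finset.sum_congr rfl fun j _ => ?_
        have e : Real.exp (l * (j - x)) = Real.exp (-(l * x)) * Real.exp l ^ j := by
          rw [← Real.exp_nat_mul, ← Real.exp_add]; ring_nf
        simp only [bernsteinPolynomial, Polynomial.eval_mul, Polynomial.eval_natCast,
          Polynomial.eval_pow, Polynomial.eval_X, Polynomial.eval_sub, Polynomial.eval_one]
        rw [e, mul_pow]; ring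
    _ ≤ Real.exp (-(l * x)) * Real.exp (l * t + l ^ 2 / 8) ^ n := by
        have := bernoulli_mgf_le t l h0 h1
        gcongr
    _ = Real.exp (-2 * n * (x / n - t) ^ 2) := by
        rw [← Real.exp_nat_mul, ← Real.exp_add, hl]
        congr 1
        field_simp
        ring

/-- The density of `Beta(m + 1, k + 1 - m)`, the law of the `(m + 1)`-st order statistic of
`k + 1` uniform variables. -/
noncomputable def orderDensity (k m : ℕ) (u : ℝ) : ℝ :=
  ((Nat.factorial (k + 1) : ℝ) / ((Nat.factorial m : ℝ) * (Nat.factorial (k - m) : ℝ)))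
    * u ^ m * (1 - u) ^ (k - m)

/-- The probability that a `Binomial(k + 1, t)` variable is at most `m`. -/
noncomputable def binomialCdf (k m : ℕ) (t : ℝ) : ℝ :=
  ∑ j ∈ Finset.range (m + 1), (bernsteinPolynomial ℝ (k + 1) j).eval t

lemma orderDensity_eq (k m : ℕ) (hm : m ≤ k) (u : ℝ) :
    orderDensity k m u = (k + 1) * (bernsteinPolynomial ℝ k m).eval u := by
  simp only [orderDensity, bernsteinPolynomial, Polynomial.eval_mul, Polynomial.eval_natCast,
    Polynomial.eval_pow, Polynomial.eval_X, Polynomial.eval_sub, Polynomial.eval_one]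
  rw [Nat.cast_choose ℝ hm, Nat.factorial_succ]
  push_cast
  ring

/-- The derivatives of consecutive Bernstein polynomials telescope, which leaves one term. -/
lemma derivative_sum_bernstein (k m : ℕ) :
    Polynomial.derivative (∑ j ∈ Finset.range (m + 1), bernsteinPolynomial ℝ (k + 1) j)
      = -((k : Polynomial ℝ) + 1) * bernsteinPolynomial ℝ k m := by
  induction m with
  | zero => simp [bernsteinPolynomial.derivative_zero]
  | succ m ih =>
    rw [Finset.sum_range_succ, Polynomial.derivative_add, ih,
      bernsteinPolynomial.derivative_succ_aux]
    ring

lemma hasDerivAt_binomial_cdf (k m : ℕ) (hm : m ≤ k) (u : ℝ) :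
    HasDerivAt (binomialCdf k m) (-orderDensity k m u) u := by
  have h := (∑ j ∈ Finset.range (m + 1), bernsteinPolynomial ℝ (k + 1) j).hasDerivAt u
  rw [derivative_sum_bernstein] at h
  rw [orderDensity_eq k m hm]
  have e : binomialCdf k m = fun t =>
      (∑ j ∈ Finset.range (m + 1), bernsteinPolynomial ℝ (k + 1) j).eval t := by
    funext t
    simp [binomialCdf, Polynomial.eval_finsetSum]
  rw [e]
  refine h.congr_deriv ?_
  simp only [Polynomial.eval_mul, Polynomial.eval_neg, Polynomial.eval_add,
    Polynomial.eval_natCast, Polynomial.eval_one]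
  ring

lemma continuous_orderDensity (k m : ℕ) : Continuous (orderDensity k m) := by
  unfold orderDensity; fun_prop

lemma setIntegral_orderDensity (k m : ℕ) (hm : m ≤ k) (a b : ℝ) (hab : a ≤ b) :
    ∫ u in Set.Icc a b, orderDensity k m u = binomialCdf k m a - binomialCdf k m b := by
  rw [integral_Icc_eq_integral_Ioc, ← intervalIntegral.integral_of_le hab]
  have h := intervalIntegral.integral_eq_sub_of_hasDerivAt (a := a) (b := b)
    (f := -binomialCdf k m) (f' := orderDensity k m)
    (fun u _ => by simpa using (hasDerivAt_binomial_cdf k m hm u).neg)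
    ((continuous_orderDensity k m).intervalIntegrable _ _)
  rw [h, Pi.neg_apply, Pi.neg_apply]; ring

lemma binomialCdf_zero (k m : ℕ) : binomialCdf k m 0 = 1 := by
  simp [binomialCdf, bernsteinPolynomial.eval_at_0]

lemma binomialCdf_one (k m : ℕ) (hm : m ≤ k) : binomialCdf k m 1 = 0 := by
  refine Finset.sum_eq_zero fun j hj => ?_
  rw [bernsteinPolynomial.eval_at_1, if_neg]
  have := Finset.mem_range.1 hj
  omega

lemma one_sub_binomialCdf (k m : ℕ) (hm : m ≤ k) (t : ℝ) :
    1 - binomialCdf k m t =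
      ∑ j ∈ Finset.Ico (m + 1) (k + 2), (bernsteinPolynomial ℝ (k + 1) j).eval t := by
  have h := congrArg (Polynomial.eval t) (bernsteinPolynomial.sum ℝ (k + 1))
  rw [Polynomial.eval_finsetSum, Polynomial.eval_one,
    ← Finset.sum_range_add_sum_Ico _ (show m + 1 ≤ k + 1 + 1 by omega)] at h
  rw [binomialCdf]
  linarith

lemma exp_tail_le (n d e : ℝ) (hn : 0 ≤ n) (he : 0 ≤ e) (h : e ≤ |d|) :
    Real.exp (-2 * n * d ^ 2) ≤ Real.exp (-2 * n * e ^ 2) := by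
  have h2 : e ^ 2 ≤ d ^ 2 := by rw [← sq_abs d]; gcongr
  apply Real.exp_le_exp.2
  have := mul_le_mul_of_nonneg_left h2 hn
  linarith

/-- Hoeffding's inequality for the event that a `Binomial(k + 1, p† + ε)` variable is at most
`m`; since `m / (k + 1) ≤ p†`, the deviation is at least `ε`. -/
lemma upper_tail_le (k m : ℕ) (hm : m ≤ k) (ε : ℝ) (hε : 0 < ε) :
    ∫ u in Set.Icc (((m : ℝ) + 1) / ((k : ℝ) + 2) + ε) 1, orderDensity k m u
      ≤ Real.exp (-2 * ((k : ℝ) + 1) * ε ^ 2) := by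
  have hmk : (m : ℝ) ≤ k := by exact_mod_cast hm
  set t := ((m : ℝ) + 1) / ((k : ℝ) + 2) + ε with ht
  rcases lt_or_ge 1 t with h1 | h1
  · rw [Set.Icc_eq_empty (not_le.2 h1)]
    simp only [Measure.restrict_empty, integral_zero_measure]
    positivity
  have h0 : 0 ≤ t := by positivity
  have hd : (m : ℝ) / ((k : ℝ) + 1) ≤ ((m : ℝ) + 1) / ((k : ℝ) + 2) := by
    rw [div_le_div_iff₀ (by positivity) (by positivity)]; nlinarith
  rw [setIntegral_orderDensity k m hm _ _ h1, binomialCdf_one k m hm, sub_zero]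
  have hH := binomial_hoeffding (k + 1) (by omega) t m h0 h1 (Finset.range (m + 1))
    (Finset.range_subset_range.2 (by omega)) (by
      intro j hj
      have : (j : ℝ) ≤ m := by exact_mod_cast Nat.lt_succ_iff.1 (Finset.mem_range.1 hj)
      push_cast
      exact mul_nonneg_of_nonpos_of_nonpos (by linarith) (by linarith))
  push_cast at hH
  refine hH.trans (exp_tail_le _ _ _ (by positivity) hε.le ?_)
  rw [abs_of_nonpos (by linarith)]
  linarith

/-- Hoeffding's inequality for the event that a `Binomial(k + 1, p† - ε)` variable is at least
`m + 1`; since `p† ≤ (m + 1) / (k + 1)`, the deviation is at least `ε`. -/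
lemma lower_tail_le (k m : ℕ) (hm : m ≤ k) (ε : ℝ) (hε : 0 < ε) :
    ∫ u in Set.Icc 0 (((m : ℝ) + 1) / ((k : ℝ) + 2) - ε), orderDensity k m u
      ≤ Real.exp (-2 * ((k : ℝ) + 1) * ε ^ 2) := by
  have hmk : (m : ℝ) ≤ k := by exact_mod_cast hm
  set t := ((m : ℝ) + 1) / ((k : ℝ) + 2) - ε with ht
  rcases lt_or_ge t 0 with h0 | h0
  · rw [Set.Icc_eq_empty (not_le.2 h0)]
    simp only [Measure.restrict_empty, integral_zero_measure]
    positivity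
  have h1 : t ≤ 1 := by
    have : ((m : ℝ) + 1) / ((k : ℝ) + 2) ≤ 1 := by
      rw [div_le_one (by positivity)]; linarith
    linarith
  have hd : ((m : ℝ) + 1) / ((k : ℝ) + 2) ≤ ((m : ℝ) + 1) / ((k : ℝ) + 1) := by
    gcongr; norm_num
  rw [setIntegral_orderDensity k m hm _ _ h0, binomialCdf_zero, one_sub_binomialCdf k m hm]
  have hH := binomial_hoeffding (k + 1) (by omega) t (m + 1) h0 h1
    (Finset.Ico (m + 1) (k + 2))
    (fun j hj => Finset.mem_range.2 (Finset.mem_Ico.1 hj).2) (by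
      intro j hj
      have : (m : ℝ) + 1 ≤ j := by exact_mod_cast (Finset.mem_Ico.1 hj).1
      push_cast
      exact mul_nonneg (by linarith) (by linarith))
  push_cast at hH
  refine hH.trans (exp_tail_le _ _ _ (by positivity) hε.le ?_)
  rw [abs_of_nonneg (by linarith)]
  linarith

/-- Lemma B.1: symmetric concentration for the `M`-th order statistic of
`K` i.i.d. uniforms: the `Beta(M, K+1-M)` mass of the two-sided tail
`{u ∈ [0,1] : |u - M/(K+1)| ≥ ε}` is at most `2 exp(-2Kε²)`. -/
theorem beta_two_sided_tail_bound
    (K M : ℕ) (hK : 1 ≤ K) (hM : 1 ≤ M) (hMK : M ≤ K)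
    (ε : ℝ) (hε0 : 0 < ε) (hε1 : ε < 1) :
    ∫ u in {u : ℝ | u ∈ Set.Icc (0:ℝ) 1 ∧ ε ≤ |u - (M : ℝ) / ((K : ℝ) + 1)|},
        ((Nat.factorial K : ℝ) /
          ((Nat.factorial (M - 1) : ℝ) * (Nat.factorial (K - M) : ℝ)))
          * u ^ (M - 1) * (1 - u) ^ (K - M)
      ≤ 2 * Real.exp (-2 * (K : ℝ) * ε ^ 2) := by
  obtain ⟨k, rfl⟩ : ∃ k, K = k + 1 := ⟨K - 1, by omega⟩
  obtain ⟨m, rfl⟩ : ∃ m, M = m + 1 := ⟨M - 1, by omega⟩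
  have hm : m ≤ k := by omega
  have hmk : (m : ℝ) ≤ k := by exact_mod_cast hm
  have hp : ((m + 1 : ℕ) : ℝ) / (((k + 1 : ℕ) : ℝ) + 1) = ((m : ℝ) + 1) / ((k : ℝ) + 2) := by
    push_cast; congr 1; ring
  have hp0 : 0 ≤ ((m : ℝ) + 1) / ((k : ℝ) + 2) := by positivity
  have hp1 : ((m : ℝ) + 1) / ((k : ℝ) + 2) ≤ 1 := by
    rw [div_le_one (by positivity)]; linarith
  have hU := upper_tail_le k m hm ε hε0
  have hL := lower_tail_le k m hm ε hε0
  rw [hp]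
  set p := ((m : ℝ) + 1) / ((k : ℝ) + 2) with hpdef
  have hset : {u : ℝ | u ∈ Set.Icc (0:ℝ) 1 ∧ ε ≤ |u - p|} =
      Set.Icc 0 (p - ε) ∪ Set.Icc (p + ε) 1 := by
    ext u
    simp only [Set.mem_ofPred_eq, Set.mem_union, Set.mem_Icc, le_abs]
    constructor
    · rintro ⟨⟨h0, h1⟩, h | h⟩
      · exact Or.inr ⟨by linarith, h1⟩
      · exact Or.inl ⟨h0, by linarith⟩
    · rintro (⟨h0, h1⟩ | ⟨h0, h1⟩)
      · exact ⟨⟨h0, by linarith⟩, Or.inr (by linarith)⟩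
      · exact ⟨⟨by linarith, h1⟩, Or.inl (by linarith)⟩
  have hdisj : Disjoint (Set.Icc 0 (p - ε)) (Set.Icc (p + ε) 1) := by
    rw [Set.disjoint_left]
    rintro u ⟨_, h⟩ ⟨h', _⟩
    linarith
  have hf : (fun u : ℝ => ((Nat.factorial (k + 1) : ℝ) /
      ((Nat.factorial (m + 1 - 1) : ℝ) * (Nat.factorial (k + 1 - (m + 1)) : ℝ)))
      * u ^ (m + 1 - 1) * (1 - u) ^ (k + 1 - (m + 1))) = orderDensity k m := by
    funext u
    simp only [orderDensity, Nat.add_sub_cancel, Nat.add_sub_add_right]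
  rw [hset, hf, setIntegral_union hdisj measurableSet_Icc
    (continuous_orderDensity k m).continuousOn.integrableOn_Icc
    (continuous_orderDensity k m).continuousOn.integrableOn_Icc]
  push_cast
  linarith
end

section
/- For every real ζ > 0, the function g(ζ) := ln(1 + ζ²) − 2 + (2/ζ)·arctan ζ is strictly positive. -/
/-!
Writing `g ζ` for the expression in `g_pos`, the product `ζ * g ζ` extends smoothly to `0` with
value `0`, and its derivative is `log (1 + ζ ^ 2)` (`hasDerivAt_mul_g`), which is positive for
`ζ > 0`. So `ζ * g ζ` is strictly increasing on `[0, ∞)`, hence positive for `ζ > 0`.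
-/

/-- The function is `y * g y`: all rational terms of its derivative cancel. -/
theorem hasDerivAt_mul_g (x : ℝ) :
    HasDerivAt (fun y : ℝ => y * Real.log (1 + y ^ 2) - 2 * y + 2 * Real.arctan y)
      (Real.log (1 + x ^ 2)) x := by
  have hx : 1 + x ^ 2 ≠ 0 := by positivity
  have h1 : HasDerivAt (fun y : ℝ => 1 + y ^ 2) (2 * x) x := by
    simpa using (hasDerivAt_pow 2 x).const_add 1
  have h := (((hasDerivAt_id' x).mul (h1.log hx)).sub ((hasDerivAt_id' x).const_mul 2)).add
    ((Real.hasDerivAt_arctan x).const_mul 2)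
  refine h.congr_deriv ?_
  field_simp
  ring

/-- `g(ζ) = ln(1+ζ²) - 2 + (2/ζ) arctan ζ` is strictly positive for all
`ζ > 0`. -/
theorem g_pos (ζ : ℝ) (hζ : 0 < ζ) :
    0 < Real.log (1 + ζ ^ 2) - 2 + (2 / ζ) * Real.arctan ζ := by
  have hmono : StrictMonoOn
      (fun y : ℝ => y * Real.log (1 + y ^ 2) - 2 * y + 2 * Real.arctan y) (Set.Ici 0) := by
    refine strictMonoOn_of_deriv_pos (convex_Ici 0)
      (fun x _ => (hasDerivAt_mul_g x).continuousAt.continuousWithinAt) fun x hx => ?_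
    rw [interior_Ici, Set.mem_Ioi] at hx
    rw [(hasDerivAt_mul_g x).deriv]
    exact Real.log_pos (by nlinarith)
  have h := hmono (Set.mem_Ici.2 le_rfl) (Set.mem_Ici.2 hζ.le) hζ
  simp only [Real.arctan_zero, zero_mul, mul_zero, sub_zero, add_zero] at h
  have key : Real.log (1 + ζ ^ 2) - 2 + (2 / ζ) * Real.arctan ζ
      = (ζ * Real.log (1 + ζ ^ 2) - 2 * ζ + 2 * Real.arctan ζ) / ζ := by
    field_simp
  rw [key]
  exact div_pos h hζ
end

section
/- (Lemma 2, uniform high-SNR expansion with explicit remainder.) Let D > 0, d > 0 and S > 0, set Λ := log₂ S, and suppose S > 1 (so Λ > 0). Define C₀ := max{ |log₂(d²)|, |log₂(d² + (D/2)²)| }, C₁ := (d² + (D/2)²)/ln 2, and Λ₀ := max{4C₀, log₂(4C₁), 1}. For x ∈ [−D/2, D/2] let R₀(x) := log₂(1 + S/(x² + d²)) and define the remainder R_Λ(x) := 1/R₀(x) − 1/Λ − log₂(x² + d²)/Λ². Then for every Λ ≥ Λ₀ and every x ∈ [−D/2, D/2], |R_Λ(x)| ≤ 2·(C₀ + C₁·2^{−Λ})²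 / Λ³ + C₁·2^{−Λ} / Λ². -/
/-!
Write `q = x² + d²`. Since `1 + S/q = (S/q)(1 + q/S)`, the rate is `R₀ = Λ + δ` with
`δ = ε - log₂ q` and `0 ≤ ε = log₂(1 + q/S) ≤ C₁ 2^{-Λ}`. Monotonicity of the logarithm gives
`|log₂ q| ≤ C₀`, so the threshold on `Λ` forces `|δ| ≤ C₀ + C₁ 2^{-Λ} ≤ Λ/4 + 1/4 ≤ Λ/2`.
The claim then follows from the exact second-order identity
`1/(Λ+δ) = 1/Λ - δ/Λ² + δ²/(Λ²(Λ+δ))` in which `Λ + δ ≥ Λ/2` (`abs_inv_expansion_le`).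
-/

/-- The reciprocal of `Λ - L + ε`, expanded to first order in `L` only: the quadratic term of the
bound comes from the geometric remainder, the linear one from `ε` being left out of the
expansion. -/
lemma abs_inv_expansion_le {Λ L ε C e : ℝ} (hΛ : 0 < Λ) (hL : |L| ≤ C) (hε : 0 ≤ ε)
    (hεe : ε ≤ e) (hhalf : C + e ≤ Λ / 2) :
    |1 / (Λ - L + ε) - 1 / Λ - L / Λ ^ 2| ≤ 2 * (C + e) ^ 2 / Λ ^ 3 + e / Λ ^ 2 := by
  obtain ⟨hL1, hL2⟩ := abs_le.mp hL
  have hR : Λ / 2 ≤ Λ - L + ε := by linarith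
  have hR0 : 0 < Λ - L + ε := by linarith
  have key : 1 / (Λ - L + ε) - 1 / Λ - L / Λ ^ 2
      = (ε - L) ^ 2 / (Λ ^ 2 * (Λ - L + ε)) - ε / Λ ^ 2 := by
    field_simp
    ring
  have hsq : (ε - L) ^ 2 ≤ (C + e) ^ 2 := by
    apply sq_le_sq'
    all_goals linarith
  have hquad : (ε - L) ^ 2 / (Λ ^ 2 * (Λ - L + ε)) ≤ 2 * (C + e) ^ 2 / Λ ^ 3 := by
    calc (ε - L) ^ 2 / (Λ ^ 2 * (Λ - L + ε))
        ≤ (C + e) ^ 2 / (Λ ^ 2 * (Λ / 2)) := by gcongr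
      _ = 2 * (C + e) ^ 2 / Λ ^ 3 := by
        field_simp
  have hlin : ε / Λ ^ 2 ≤ e / Λ ^ 2 := by gcongr
  rw [key]
  refine (abs_sub _ _).trans ?_
  rw [abs_of_nonneg (by positivity), abs_of_nonneg (by positivity)]
  exact add_le_add hquad hlin


/-- Lemma 2: uniform high-SNR expansion with explicit remainder.
With `Λ = log₂ S`, `C₀ = max{|log₂ d²|, |log₂(d²+(D/2)²)|}`, `C₁ = (d²+(D/2)²)/ln 2`,
`Λ₀ = max{4C₀, log₂(4C₁), 1}` and `R₀(x) = log₂(1 + S/(x²+d²))`, the remainder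
`R_Λ(x) = 1/R₀(x) - 1/Λ - log₂(x²+d²)/Λ²` satisfies, for `Λ ≥ Λ₀` and
`x ∈ [-D/2, D/2]`, `|R_Λ(x)| ≤ 2(C₀+C₁2^{-Λ})²/Λ³ + C₁2^{-Λ}/Λ²`. -/
theorem uniform_high_snr_expansion
    (D d S : ℝ) (hD : 0 < D) (hd : 0 < d) (hS : 1 < S)
    (Λ C₀ C₁ Λ₀ : ℝ)
    (hΛ : Λ = Real.logb 2 S)
    (hC₀ : C₀ = max |Real.logb 2 (d ^ 2)| |Real.logb 2 (d ^ 2 + (D / 2) ^ 2)|)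
    (hC₁ : C₁ = (d ^ 2 + (D / 2) ^ 2) / Real.log 2)
    (hΛ₀ : Λ₀ = max (max (4 * C₀) (Real.logb 2 (4 * C₁))) 1)
    (hΛge : Λ₀ ≤ Λ) :
    ∀ x ∈ Set.Icc (-(D / 2)) (D / 2),
      |1 / Real.logb 2 (1 + S / (x ^ 2 + d ^ 2)) - 1 / Λ
          - Real.logb 2 (x ^ 2 + d ^ 2) / Λ ^ 2|
        ≤ 2 * (C₀ + C₁ * (2 : ℝ) ^ (-Λ)) ^ 2 / Λ ^ 3
          + C₁ * (2 : ℝ) ^ (-Λ) / Λ ^ 2 := by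
  intro x hx
  set M := d ^ 2 + (D / 2) ^ 2 with hM
  set q := x ^ 2 + d ^ 2 with hq
  have hd2 : 0 < d ^ 2 := by positivity
  have hq1 : d ^ 2 ≤ q := by rw [hq]; nlinarith [sq_nonneg x]
  have hqM : q ≤ M := by
    have := sq_le_sq' hx.1 hx.2
    linarith
  have hq0 : 0 < q := hd2.trans_le hq1
  have hM0 : 0 < M := hq0.trans_le hqM
  have hS0 : 0 < S := one_pos.trans hS
  have hlog2 : 0 < Real.log 2 := Real.log_pos one_lt_two
  have hC₁0 : 0 < C₁ := by rw [hC₁]; positivity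
  rw [hΛ₀] at hΛge
  have h4C₀ : 4 * C₀ ≤ Λ := ((le_max_left _ _).trans (le_max_left _ _)).trans hΛge
  have hlogC₁ : Real.logb 2 (4 * C₁) ≤ Λ :=
    ((le_max_right _ _).trans (le_max_left _ _)).trans hΛge
  have hΛ1 : 1 ≤ Λ := (le_max_right _ _).trans hΛge
  have hpow : (2 : ℝ) ^ (-Λ) = S⁻¹ := by
    rw [Real.rpow_neg zero_le_two, hΛ, Real.rpow_logb two_pos (by norm_num) hS0]
  have hquarter : C₁ * S⁻¹ ≤ 1 / 4 := by
    have h4 : 4 * C₁ ≤ S := by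
      rw [hΛ] at hlogC₁
      exact (Real.logb_le_logb one_lt_two (by positivity) hS0).mp hlogC₁
    rw [← div_eq_mul_inv, div_le_iff₀ hS0]
    linarith
  have hL : |Real.logb 2 q| ≤ C₀ := by
    rw [hC₀]
    exact abs_le_max_abs_abs (Real.logb_le_logb_of_le one_lt_two hd2 hq1)
      (Real.logb_le_logb_of_le one_lt_two hq0 hqM)
  have hqS : 0 < q / S := by positivity
  have hε0 : 0 ≤ Real.logb 2 (1 + q / S) :=
    Real.logb_nonneg one_lt_two (by linarith)
  have hεe : Real.logb 2 (1 + q / S) ≤ C₁ * S⁻¹ := by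
    -- `ln (1 + t) ≤ t` at `t = q / S`, followed by `q ≤ M`
    have h1 : Real.log (1 + q / S) ≤ M / S := by
      have h2 := Real.log_le_sub_one_of_pos (show 0 < 1 + q / S by linarith)
      have h3 : q / S ≤ M / S := by gcongr
      linarith
    calc Real.logb 2 (1 + q / S) = Real.log (1 + q / S) / Real.log 2 := rfl
      _ ≤ M / S / Real.log 2 := by gcongr
      _ = C₁ * S⁻¹ := by
        rw [hC₁]
        ring
  have hR : Real.logb 2 (1 + S / q) = Λ - Real.logb 2 q + Real.logb 2 (1 + q / S) := by
    have hfac : 1 + S / q = S / q * (1 + q / S) := by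
      field_simp
      ring
    rw [hfac, Real.logb_mul (by positivity) (by positivity),
      Real.logb_div hS0.ne' hq0.ne', hΛ]
  rw [hR, hpow]
  exact abs_inv_expansion_le (by linarith) hL hε0 hεe (by linarith)
end

section
/- (High-SNR positivity threshold, eq. (29) core inequality.) Let g > 0, C₀ ≥ 0 and C₁ > 0 be real numbers, and define Λ* := max{ 16(C₀ + C₁)²·ln 2 / g, log₂(8 C₁ ln 2 / g), 1 }. Then for every real Λ ≥ Λ*, g/(Λ² ln 2) − 4(C₀ + C₁·2^{−Λ})²/Λ³ − 2 C₁·2^{−Λ}/Λ² ≥ g/(2 Λ² ln 2) > 0. -/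
/-!
Write `L = log 2` and `t = 2 ^ (-Λ)`. Of the leading term `g / (Λ² L)`, half is to be kept, and each of
the two error terms uses up at most a quarter. Since `Λ ≥ 1`, `t ≤ 1`, so the first part of the
threshold gives `4 (C₀ + C₁ t)² / Λ ≤ 4 (C₀ + C₁)² / Λ ≤ g / (4 L)`; the second part says
`t ≤ g / (8 C₁ L)`, that is `2 C₁ t ≤ g / (4 L)`. Dividing by `Λ²` and adding gives the claim.
-/

/-- eq. (29) core inequality: for
`Λ* = max{16(C₀+C₁)² ln 2 / g, log₂(8C₁ ln 2 / g), 1}` and every `Λ ≥ Λ*`,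
`g/(Λ² ln 2) - 4(C₀+C₁2^{-Λ})²/Λ³ - 2C₁2^{-Λ}/Λ² ≥ g/(2Λ² ln 2) > 0`. -/
theorem high_snr_positivity_threshold
    (g C₀ C₁ Λstar Λ : ℝ) (hg : 0 < g) (hC₀ : 0 ≤ C₀) (hC₁ : 0 < C₁)
    (hΛstar : Λstar = max (max (16 * (C₀ + C₁) ^ 2 * Real.log 2 / g)
        (Real.logb 2 (8 * C₁ * Real.log 2 / g))) 1)
    (hΛ : Λstar ≤ Λ) :
    g / (Λ ^ 2 * Real.log 2) - 4 * (C₀ + C₁ * (2 : ℝ) ^ (-Λ)) ^ 2 / Λ ^ 3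
        - 2 * C₁ * (2 : ℝ) ^ (-Λ) / Λ ^ 2
      ≥ g / (2 * Λ ^ 2 * Real.log 2)
    ∧ 0 < g / (2 * Λ ^ 2 * Real.log 2) := by
  have hL : 0 < Real.log 2 := Real.log_pos one_lt_two
  rw [hΛstar, max_le_iff, max_le_iff] at hΛ
  obtain ⟨⟨h1, h2⟩, h3⟩ := hΛ
  have hΛ0 : 0 < Λ := by linarith
  refine ⟨?_, by positivity⟩
  have ht0 : 0 < (2 : ℝ) ^ (-Λ) := by positivity
  have ht1 : (2 : ℝ) ^ (-Λ) ≤ 1 :=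
    Real.rpow_le_one_of_one_le_of_nonpos one_le_two (by linarith)
  have hpow : 8 * C₁ * Real.log 2 / g ≤ (2 : ℝ) ^ Λ :=
    (Real.logb_le_iff_le_rpow one_lt_two (by positivity)).1 h2
  have hinv : (2 : ℝ) ^ Λ * (2 : ℝ) ^ (-Λ) = 1 := by
    rw [← Real.rpow_add two_pos, add_neg_cancel, Real.rpow_zero]
  rw [div_le_iff₀ hg] at h1 hpow
  generalize (2 : ℝ) ^ (-Λ) = t at *
  have hexp : 2 * C₁ * t ≤ g / (4 * Real.log 2) := by
    rw [le_div_iff₀ (by positivity)]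
    calc 2 * C₁ * t * (4 * Real.log 2) = 8 * C₁ * Real.log 2 * t := by ring
      _ ≤ (2 : ℝ) ^ Λ * g * t := by gcongr
      _ = g * ((2 : ℝ) ^ Λ * t) := by ring
      _ = g := by rw [hinv, mul_one]
  have hquad : 4 * (C₀ + C₁ * t) ^ 2 / Λ ≤ g / (4 * Real.log 2) := by
    rw [div_le_div_iff₀ hΛ0 (by positivity)]
    have hle : C₀ + C₁ * t ≤ C₀ + C₁ := by nlinarith
    calc 4 * (C₀ + C₁ * t) ^ 2 * (4 * Real.log 2)
        ≤ 4 * (C₀ + C₁) ^ 2 * (4 * Real.log 2) := by gcongr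
      _ ≤ g * Λ := by linarith
  have key : 0 ≤ (g / (4 * Real.log 2) - 4 * (C₀ + C₁ * t) ^ 2 / Λ
      + (g / (4 * Real.log 2) - 2 * C₁ * t)) / Λ ^ 2 :=
    div_nonneg (by linarith) (by positivity)
  rw [ge_iff_le, ← sub_nonneg]
  convert key using 1
  field_simp
  ring
end

section
/- (Square-root law near the threshold, eq. (38).) Let S > 0, d > 0, c > 0 and t₀ ∈ ℝ. Set Λ_d := log₂(1 + S/d²), T_min := t₀ + c/Λ_d, κ := (d²/√S)·√(1 + S/d²)·Λ_d·√(ln 2 / c), and ρ(T) := √( S/(2^{c/(T − t₀)} − 1) − d² ) for T > T_min. Then ρ(T)/√(T − T_min) tends to κ as T tends to T_min from the right. -/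
/-!
Write `g T = S / (2 ^ (c / (T - t₀)) - 1) - d ^ 2`. Since `2 ^ Λd = 1 + S / d ^ 2` and
`c / (Tmin - t₀) = Λd`, the function `g` vanishes at `Tmin`, where it is differentiable with
`g' Tmin = S * (1 + S / d ^ 2) * log 2 * (Λd ^ 2 / c) / (S / d ^ 2) ^ 2 = κ ^ 2`. For `T > Tmin`
the ratio in question is the square root of the difference quotient of `g` at `Tmin`, so it
tends to `√(κ ^ 2) = κ`, as `κ ≥ 0`.
-/

open Filter

/-- eq. (38): square-root law near the threshold: with
`Λ_d = log₂(1+S/d²)`, `T_min = t₀ + c/Λ_d` and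
`κ = (d²/√S)·√(1+S/d²)·Λ_d·√(ln 2 / c)`, the coverage radius
`ρ(T) = √(S/(2^{c/(T-t₀)} - 1) - d²)` satisfies `ρ(T)/√(T - T_min) → κ` as
`T → T_min⁺`. -/
theorem coverage_radius_sqrt_law
    (S d c t₀ Λd Tmin κ : ℝ) (hS : 0 < S) (hd : 0 < d) (hc : 0 < c)
    (hΛd : Λd = Real.logb 2 (1 + S / d ^ 2))
    (hTmin : Tmin = t₀ + c / Λd)
    (hκ : κ = (d ^ 2 / Real.sqrt S) * Real.sqrt (1 + S / d ^ 2) * Λd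
        * Real.sqrt (Real.log 2 / c)) :
    Tendsto
      (fun T => Real.sqrt (S / ((2 : ℝ) ^ (c / (T - t₀)) - 1) - d ^ 2)
        / Real.sqrt (T - Tmin))
      (nhdsWithin Tmin (Set.Ioi Tmin)) (nhds κ) := by
  have hx : 0 < S / d ^ 2 := by positivity
  have hΛ : 0 < Λd := by
    rw [hΛd]
    exact Real.logb_pos (by norm_num) (by linarith)
  have hlog : 0 < Real.log 2 := Real.log_pos (by norm_num)
  have hsub : Tmin - t₀ = c / Λd := by rw [hTmin]; ring
  have hne : Tmin - t₀ ≠ 0 := by rw [hsub]; positivity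
  have hu : c / (Tmin - t₀) = Λd := by rw [hsub]; field_simp
  have hpow : (2 : ℝ) ^ (c / (Tmin - t₀)) = 1 + S / d ^ 2 := by
    rw [hu, hΛd]
    exact Real.rpow_logb (by norm_num) (by norm_num) (by linarith)
  have hκ0 : 0 ≤ κ := by rw [hκ]; positivity
  have hκ2 : κ ^ 2 = d ^ 4 / S * (1 + S / d ^ 2) * Λd ^ 2 * (Real.log 2 / c) := by
    rw [hκ, mul_pow, mul_pow, mul_pow, div_pow, Real.sq_sqrt hS.le,
      Real.sq_sqrt (by positivity), Real.sq_sqrt (by positivity)]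
    ring
  have hder : HasDerivAt (fun T => S / ((2 : ℝ) ^ (c / (T - t₀)) - 1) - d ^ 2)
      (κ ^ 2) Tmin := by
    have h1 : HasDerivAt (fun T => c / (T - t₀)) (-(Λd ^ 2 / c)) Tmin := by
      refine ((hasDerivAt_const Tmin c).fun_div
        ((hasDerivAt_id' Tmin).sub_const t₀) hne).congr_deriv ?_
      rw [hsub]
      field_simp
      ring
    have h2 := (h1.const_rpow (by norm_num : (0 : ℝ) < 2)).sub_const 1
    refine (((hasDerivAt_const Tmin S).fun_div h2
      (by rw [hpow]; linarith)).sub_const (d ^ 2)).congr_deriv ?_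
    rw [hpow, hκ2, add_sub_cancel_left]
    field_simp
    ring
  have hzero : S / ((2 : ℝ) ^ (c / (Tmin - t₀)) - 1) - d ^ 2 = 0 := by
    rw [hpow, add_sub_cancel_left, div_div_cancel₀ hS.ne', sub_self]
  have hlim := (hder.tendsto_slope.mono_left
    (nhdsWithin_mono Tmin fun T (hT : Tmin < T) => hT.ne')).sqrt
  rw [Real.sqrt_sq hκ0] at hlim
  refine hlim.congr' ?_
  filter_upwards [self_mem_nhdsWithin] with T hT
  rw [slope_def_field, hzero, sub_zero, Real.sqrt_div' _ (sub_nonneg.2 (le_of_lt hT))]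
end
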